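/- For arbitrary matrices A_k (not necessarily of full column or row rank), for every r ≥ 0 the cyclic exact BCD iterates satisfy f(x^{(r+1)}) − f* ≤ R_0 · √(L_max) · (K + 2) · √(Σ_{k=1}^K ‖A_k(x_k^{(r+1)} − x_k^{(r)})‖²). -/

import Mathlib

open Finset

/-- Squared Euclidean norm of a vector in `ℝ^n`. -/
noncomputable def sqnorm {n : ℕ} (v : Fin n → ℝ) : ℝ := ∑ i, v i ^ 2

/-- Euclidean inner product on `ℝ^n`. -/
noncomputable def dotp {n : ℕ} (u v : Fin n → ℝ) : ℝ := ∑ i, u i * v i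

/-- `λ_max(AᵀA)` for a real matrix `A`, characterized as the maximum of `‖Av‖²`
over unit vectors `v`. -/
noncomputable def lamMaxQ {M N : ℕ} (A : Matrix (Fin M) (Fin N) ℝ) : ℝ :=
  sSup {r : ℝ | ∃ v : Fin N → ℝ, sqnorm v = 1 ∧ r = sqnorm (A.mulVec v)}

/-- `λ_min(AᵀA)` for a real matrix `A`, characterized as the minimum of `‖Av‖²`
over unit vectors `v`. -/
noncomputable def lamMinQ {M N : ℕ} (A : Matrix (Fin M) (Fin N) ℝ) : ℝ :=
  sInf {r : ℝ | ∃ v : Fin N → ℝ, sqnorm v = 1 ∧ r = sqnorm (A.mulVec v)}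

/-- `λ_max(AᵀA)` for the concatenated matrix `A = [A_1 ⋯ A_K]`, acting on block
vectors. -/
noncomputable def lamMaxBlock {K M N : ℕ} (A : Fin K → Matrix (Fin M) (Fin N) ℝ) : ℝ :=
  sSup {r : ℝ | ∃ v : Fin K → Fin N → ℝ, (∑ k, sqnorm (v k)) = 1 ∧
    r = sqnorm (∑ k, (A k).mulVec (v k))}

/-- Maximum of a finite family of reals indexed by `Fin K`, `K ≥ 1`. -/
noncomputable def maxOf {K : ℕ} (hK : 1 ≤ K) (P : Fin K → ℝ) : ℝ :=
  Finset.univ.sup' (Finset.univ_nonempty_iff.mpr ⟨⟨0, hK⟩⟩) P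

/-- Minimum of a finite family of reals indexed by `Fin K`, `K ≥ 1`. -/
noncomputable def minOf {K : ℕ} (hK : 1 ≤ K) (P : Fin K → ℝ) : ℝ :=
  Finset.univ.inf' (Finset.univ_nonempty_iff.mpr ⟨⟨0, hK⟩⟩) P

/-- The residual `Σ_k A_k x_k − b`. -/
noncomputable def resid {K M N : ℕ} (A : Fin K → Matrix (Fin M) (Fin N) ℝ)
    (b : Fin M → ℝ) (x : Fin K → Fin N → ℝ) : Fin M → ℝ :=
  (∑ k, (A k).mulVec (x k)) - b

/-- The smooth part `g(x) = (1/2)‖Σ_k A_k x_k − b‖²`. -/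
noncomputable def gq {K M N : ℕ} (A : Fin K → Matrix (Fin M) (Fin N) ℝ)
    (b : Fin M → ℝ) (x : Fin K → Fin N → ℝ) : ℝ :=
  (1 / 2) * sqnorm (resid A b x)

/-- The objective `f(x) = g(x) + Σ_k h_k(x_k)`. -/
noncomputable def fq {K M N : ℕ} (A : Fin K → Matrix (Fin M) (Fin N) ℝ)
    (b : Fin M → ℝ) (h : Fin K → (Fin N → ℝ) → ℝ) (x : Fin K → Fin N → ℝ) : ℝ :=
  gq A b x + ∑ k, h k (x k)

/-- The partial gradient `∇_k g(x) = A_kᵀ (Σ_j A_j x_j − b)`. -/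
noncomputable def gradk {K M N : ℕ} (A : Fin K → Matrix (Fin M) (Fin N) ℝ)
    (b : Fin M → ℝ) (x : Fin K → Fin N → ℝ) (k : Fin K) : Fin N → ℝ :=
  ((A k).transpose).mulVec (resid A b x)

/-- The intermediate point `w_k^{(r+1)}` of the cycle: blocks `j < k` come from
`x^{(r+1)} = xp`, the remaining blocks from `x^{(r)} = x`. -/
def wpt {K N : ℕ} (x xp : Fin K → Fin N → ℝ) (k : Fin K) : Fin K → Fin N → ℝ :=
  fun j => if j < k then xp j else x j

/-- The objective of the `k`-th BCPG prox subproblem at the point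
`w_k^{(r+1)} = wpt x xp k`, evaluated at candidate block `y`. -/
noncomputable def bcpgObj {K M N : ℕ} (A : Fin K → Matrix (Fin M) (Fin N) ℝ)
    (b : Fin M → ℝ) (h : Fin K → (Fin N → ℝ) → ℝ) (P : Fin K → ℝ)
    (x xp : Fin K → Fin N → ℝ) (k : Fin K) (y : Fin N → ℝ) : ℝ :=
  dotp (gradk A b (wpt x xp k) k) (y - x k) + (P k / 2) * sqnorm (y - x k) + h k y

/-- One cycle of cyclic BCPG: `xp = x^{(r+1)}` is obtained from `x = x^{(r)}`
by letting, for `k = 1,…,K`, the `k`-th block minimize the prox subproblem at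
`w_k^{(r+1)}` over `X_k`. -/
def BCPGStep {K M N : ℕ} (A : Fin K → Matrix (Fin M) (Fin N) ℝ)
    (b : Fin M → ℝ) (h : Fin K → (Fin N → ℝ) → ℝ)
    (X : Fin K → Set (Fin N → ℝ)) (P : Fin K → ℝ)
    (x xp : Fin K → Fin N → ℝ) : Prop :=
  ∀ k : Fin K, xp k ∈ X k ∧ ∀ y ∈ X k,
    bcpgObj A b h P x xp k (xp k) ≤ bcpgObj A b h P x xp k y

/-- One cycle of cyclic exact BCD: `xp = x^{(r+1)}` is obtained from
`x = x^{(r)}` by letting, for `k = 1,…,K`, the `k`-th block minimize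
`f(x_1^{(r+1)},…,x_{k−1}^{(r+1)}, ·, x_{k+1}^{(r)},…,x_K^{(r)})` over `X_k`. -/
def BCDStep {K M N : ℕ} (A : Fin K → Matrix (Fin M) (Fin N) ℝ)
    (b : Fin M → ℝ) (h : Fin K → (Fin N → ℝ) → ℝ)
    (X : Fin K → Set (Fin N → ℝ))
    (x xp : Fin K → Fin N → ℝ) : Prop :=
  ∀ k : Fin K, xp k ∈ X k ∧ ∀ y ∈ X k,
    fq A b h (Function.update (wpt x xp k) k (xp k)) ≤
      fq A b h (Function.update (wpt x xp k) k y)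

/-! By exact minimization, the new block `xp k` satisfies the first-order optimality condition at
the point reached right after block `k` is updated. The residual there differs from the residual of
`xp` only by the increments of the blocks updated later. Summing the optimality conditions over `k`
and using convexity of the quadratic thus bounds `f xp - f z` by
`∑ k, ‖∑ j > k, A j (xp j - x j)‖ * ‖A k (z k - xp k)‖`, and Cauchy-Schwarz finishes. -/

theorem sum_mul_sum_le_card_mul_sqrt_mul_sqrt {ι : Type*} (s : Finset ι) (u v : ι → ℝ)
    (hv : ∀ i ∈ s, 0 ≤ v i) :
    (∑ i ∈ s, u i) * ∑ i ∈ s, v i ≤ s.card * √(∑ i ∈ s, u i ^ 2) * √(∑ i ∈ s, v i ^ 2) := by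
  have sum_le (w : ι → ℝ) : ∑ i ∈ s, w i ≤ √s.card * √(∑ i ∈ s, w i ^ 2) := by
    rw [← Real.sqrt_mul (Nat.cast_nonneg _)]
    exact Real.le_sqrt_of_sq_le sq_sum_le_card_mul_sum_sq
  calc (∑ i ∈ s, u i) * ∑ i ∈ s, v i
      ≤ (√s.card * √(∑ i ∈ s, u i ^ 2)) * (√s.card * √(∑ i ∈ s, v i ^ 2)) :=
        mul_le_mul (sum_le u) (sum_le v) (sum_nonneg hv) (by positivity)
    _ = (√s.card * √s.card) * √(∑ i ∈ s, u i ^ 2) * √(∑ i ∈ s, v i ^ 2) := by ring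
    _ = s.card * √(∑ i ∈ s, u i ^ 2) * √(∑ i ∈ s, v i ^ 2) := by
        rw [Real.mul_self_sqrt (Nat.cast_nonneg _)]

theorem inner_add_sub_nonneg_of_isMinOn_half_norm_sq_add {E H : Type*} [AddCommGroup E]
    [Module ℝ E] [SeminormedAddCommGroup H] [InnerProductSpace ℝ H] {T : E →ₗ[ℝ] H} {c : H}
    {φ : E → ℝ} {S : Set E} (hφ : ConvexOn ℝ S φ) {u y : E} (hu : u ∈ S) (hy : y ∈ S)
    (hmin : IsMinOn (fun v ↦ 1 / 2 * ‖T v - c‖ ^ 2 + φ v) S u) :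
    0 ≤ inner ℝ (T u - c) (T (y - u)) + (φ y - φ u) := by
  set slope := inner ℝ (T u - c) (T (y - u)) + (φ y - φ u)
  have slope_add_nonneg : ∀ t ∈ Set.Ioo (0 : ℝ) 1, 0 ≤ slope + t * (1 / 2 * ‖T (y - u)‖ ^ 2) := by
    rintro t ⟨ht0, ht1⟩
    have segment_mem : (1 - t) • u + t • y ∈ S :=
      hφ.1 hu hy (by linarith) ht0.le (by ring)
    have φ_segment_le : φ ((1 - t) • u + t • y) ≤ (1 - t) * φ u + t * φ y :=
      hφ.2 hu hy (by linarith) ht0.le (by ring)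
    have T_segment : T ((1 - t) • u + t • y) - c = (T u - c) + t • T (y - u) := by
      simp only [map_add, map_smul, map_sub]
      module
    have min_le := isMinOn_iff.1 hmin _ segment_mem
    rw [T_segment, norm_add_sq_real, inner_smul_right, norm_smul, mul_pow, Real.norm_eq_abs,
      sq_abs] at min_le
    refine nonneg_of_mul_nonneg_right (a := t) ?_ ht0
    linarith
  have tendsto_slope : Filter.Tendsto (fun t ↦ slope + t * (1 / 2 * ‖T (y - u)‖ ^ 2))
      (nhdsWithin 0 (Set.Ioi 0)) (nhds slope) :=
    (Continuous.tendsto' (by fun_prop) 0 slope (by ring)).mono_left nhdsWithin_le_nhds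
  exact ge_of_tendsto tendsto_slope
    (Filter.eventually_of_mem (Ioo_mem_nhdsGT one_pos) slope_add_nonneg)

section BlockDescent

variable {ι : Type*} [Fintype ι] {E : ι → Type*} [∀ k, AddCommGroup (E k)]
  [∀ k, Module ℝ (E k)] {H : Type*} [SeminormedAddCommGroup H] [NormedSpace ℝ H]

/-- The residual of the block linear system `∑ k, A k (x k) = b`. The blocks may live in different
real vector spaces `E k`, which carry no norm: `x k` is measured only through `A k (x k)`. -/
def blockResidual (A : ∀ k, E k →ₗ[ℝ] H) (b : H) (x : ∀ k, E k) : H :=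
  ∑ k, A k (x k) - b

/-- The composite objective minimized by block coordinate descent: a least-squares coupling term
plus a separable term. -/
noncomputable def blockObjective (A : ∀ k, E k →ₗ[ℝ] H) (b : H) (h : ∀ k, E k → ℝ)
    (x : ∀ k, E k) : ℝ :=
  1 / 2 * ‖blockResidual A b x‖ ^ 2 + ∑ k, h k (x k)

/-- `xp` arises from `x` by one cycle of exact block coordinate descent over `∏ k, X k`, the blocks
being visited in the order of `ι`. The point `(Iio k).piecewise xp x` carries the blocks already
updated when block `k` is visited. -/
def IsBlockDescentCycle [LinearOrder ι] [LocallyFiniteOrderBot ι] (A : ∀ k, E k →ₗ[ℝ] H) (b : H)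
    (h : ∀ k, E k → ℝ) (X : ∀ k, Set (E k)) (x xp : ∀ k, E k) : Prop :=
  ∀ k, xp k ∈ X k ∧
    IsMinOn (fun y ↦ blockObjective A b h (Function.update ((Iio k).piecewise xp x) k y))
      (X k) (xp k)

theorem blockResidual_sub_blockResidual (A : ∀ k, E k →ₗ[ℝ] H) (b : H) (x y : ∀ k, E k) :
    blockResidual A b x - blockResidual A b y = ∑ k, A k (x k - y k) := by
  simp only [blockResidual, map_sub, sum_sub_distrib]
  abel

theorem norm_blockResidual_piecewise_sub_le [DecidableEq ι] (A : ∀ k, E k →ₗ[ℝ] H) (b : H)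
    (x xp : ∀ k, E k) (s : Finset ι) :
    ‖blockResidual A b (s.piecewise xp x) - blockResidual A b xp‖ ≤
      ∑ k, ‖A k (xp k - x k)‖ := by
  rw [blockResidual_sub_blockResidual]
  refine norm_sum_le_of_le _ fun k _ ↦ ?_
  by_cases hk : k ∈ s
  · rw [piecewise_eq_of_mem _ _ _ hk, sub_self, map_zero, norm_zero]
    exact norm_nonneg _
  · rw [piecewise_eq_of_notMem _ _ _ hk, ← neg_sub, map_neg, norm_neg]

-- The right-hand side is of the form `T y - c` of the first-order condition for one block.
theorem blockResidual_update [DecidableEq ι] (A : ∀ k, E k →ₗ[ℝ] H) (b : H) (x : ∀ k, E k)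
    (k : ι) (y : E k) :
    blockResidual A b (Function.update x k y) = A k y - (A k (x k) - blockResidual A b x) := by
  have h_sub := blockResidual_sub_blockResidual A b (Function.update x k y) x
  rw [Fintype.sum_eq_single k fun j hj ↦ by rw [Function.update_of_ne hj, sub_self, map_zero],
    Function.update_self, map_sub] at h_sub
  rw [← sub_add_cancel (blockResidual A b (Function.update x k y)) (blockResidual A b x), h_sub]
  abel

theorem blockObjective_update [DecidableEq ι] (A : ∀ k, E k →ₗ[ℝ] H) (b : H)
    (h : ∀ k, E k → ℝ) (x : ∀ k, E k) (k : ι) (y : E k) :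
    blockObjective A b h (Function.update x k y) =
      1 / 2 * ‖A k y - (A k (x k) - blockResidual A b x)‖ ^ 2 + h k y +
        ∑ j ∈ univ.erase k, h j (x j) := by
  rw [blockObjective, blockResidual_update, ← add_sum_erase _ _ (mem_univ k),
    Function.update_self, sum_congr rfl fun j hj ↦ by
      rw [Function.update_of_ne (ne_of_mem_erase hj)], add_assoc]

theorem IsBlockDescentCycle.blockObjective_le [LinearOrder ι] [LocallyFiniteOrderBot ι]
    {A : ∀ k, E k →ₗ[ℝ] H} {b : H} {h : ∀ k, E k → ℝ} {X : ∀ k, Set (E k)} {x xp : ∀ k, E k}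
    (hcycle : IsBlockDescentCycle A b h X x xp) (hx : ∀ k, x k ∈ X k) :
    blockObjective A b h xp ≤ blockObjective A b h x := by
  suffices partial_cycle : ∀ s : Finset ι, IsLowerSet (s : Set ι) →
      blockObjective A b h (s.piecewise xp x) ≤ blockObjective A b h x by
    simpa using partial_cycle univ (by simpa using isLowerSet_univ)
  intro s
  induction s using Finset.induction_on_max with
  | empty => simp
  | insert k s hlt ih =>
    intro hlower
    have s_eq : s = Iio k := by
      ext j
      refine ⟨fun hj ↦ mem_Iio.2 (hlt j hj), fun hj ↦ ?_⟩
      have hj_mem := hlower (mem_Iio.1 hj).le (mem_insert_self k s)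
      exact (mem_insert.1 hj_mem).resolve_left (mem_Iio.1 hj).ne
    subst s_eq
    calc blockObjective A b h ((insert k (Iio k)).piecewise xp x)
        = blockObjective A b h (Function.update ((Iio k).piecewise xp x) k (xp k)) := by
          rw [piecewise_insert]
      _ ≤ blockObjective A b h (Function.update ((Iio k).piecewise xp x) k (x k)) :=
          isMinOn_iff.1 (hcycle k).2 _ (hx k)
      _ = blockObjective A b h ((Iio k).piecewise xp x) := by
          rw [Function.update_eq_self_iff.2]
          simp
      _ ≤ blockObjective A b h x := ih (by simpa using isLowerSet_Iio k)

end BlockDescent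

section CostToGo

variable {ι : Type*} [Fintype ι] {E : ι → Type*} [∀ k, AddCommGroup (E k)]
  [∀ k, Module ℝ (E k)] {H : Type*} [SeminormedAddCommGroup H] [InnerProductSpace ℝ H]
  {A : ∀ k, E k →ₗ[ℝ] H} {b : H} {h : ∀ k, E k → ℝ} {X : ∀ k, Set (E k)}
  {x xp z : ∀ k, E k}

theorem blockObjective_sub_le (A : ∀ k, E k →ₗ[ℝ] H) (b : H) (h : ∀ k, E k → ℝ)
    (x z : ∀ k, E k) :
    blockObjective A b h x - blockObjective A b h z ≤
      ∑ k, -(inner ℝ (blockResidual A b x) (A k (z k - x k)) + (h k (z k) - h k (x k))) := by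
  have residual_z : blockResidual A b z = blockResidual A b x + ∑ k, A k (z k - x k) := by
    rw [← blockResidual_sub_blockResidual A b z x, add_sub_cancel]
  simp only [blockObjective, residual_z, norm_add_sq_real, inner_sum, sum_neg_distrib,
    sum_add_distrib, sum_sub_distrib]
  linarith [sq_nonneg ‖∑ k, A k (z k - x k)‖]

namespace IsBlockDescentCycle

variable [LinearOrder ι] [LocallyFiniteOrderBot ι]

theorem inner_add_sub_nonneg (hcycle : IsBlockDescentCycle A b h X x xp)
    (hh : ∀ k, ConvexOn ℝ (X k) (h k)) (k : ι) {y : E k} (hy : y ∈ X k) :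
    0 ≤ inner ℝ (blockResidual A b ((insert k (Iio k)).piecewise xp x)) (A k (y - xp k)) +
      (h k y - h k (xp k)) := by
  obtain ⟨hmem, hmin⟩ := hcycle k
  rw [piecewise_insert, blockResidual_update]
  refine inner_add_sub_nonneg_of_isMinOn_half_norm_sq_add (hh k) hmem hy ?_
  simpa only [blockObjective_update, isMinOn_iff, add_le_add_iff_right] using hmin

theorem blockObjective_sub_le_sum_mul_sum (hcycle : IsBlockDescentCycle A b h X x xp)
    (hh : ∀ k, ConvexOn ℝ (X k) (h k)) (hz : ∀ k, z k ∈ X k) :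
    blockObjective A b h xp - blockObjective A b h z ≤
      (∑ k, ‖A k (xp k - z k)‖) * ∑ k, ‖A k (xp k - x k)‖ := by
  rw [sum_mul]
  refine (blockObjective_sub_le A b h xp z).trans (sum_le_sum fun k _ ↦ ?_)
  set res := blockResidual A b ((insert k (Iio k)).piecewise xp x)
  calc -(inner ℝ (blockResidual A b xp) (A k (z k - xp k)) + (h k (z k) - h k (xp k)))
      ≤ inner ℝ (res - blockResidual A b xp) (A k (z k - xp k)) := by
        rw [inner_sub_left]
        linarith [hcycle.inner_add_sub_nonneg hh k (hz k)]
    _ ≤ ‖res - blockResidual A b xp‖ * ‖A k (z k - xp k)‖ := real_inner_le_norm _ _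
    _ ≤ (∑ j, ‖A j (xp j - x j)‖) * ‖A k (z k - xp k)‖ := by
        gcongr
        exact norm_blockResidual_piecewise_sub_le A b x xp _
    _ = ‖A k (xp k - z k)‖ * ∑ j, ‖A j (xp j - x j)‖ := by
        rw [mul_comm, ← neg_sub, map_neg, norm_neg]

theorem blockObjective_sub_le_card_mul (hcycle : IsBlockDescentCycle A b h X x xp)
    (hh : ∀ k, ConvexOn ℝ (X k) (h k)) (hz : ∀ k, z k ∈ X k) :
    blockObjective A b h xp - blockObjective A b h z ≤
      Fintype.card ι * √(∑ k, ‖A k (xp k - z k)‖ ^ 2) * √(∑ k, ‖A k (xp k - x k)‖ ^ 2) :=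
  (hcycle.blockObjective_sub_le_sum_mul_sum hh hz).trans
    (sum_mul_sum_le_card_mul_sqrt_mul_sqrt univ _ _ fun _ _ ↦ norm_nonneg _)

end IsBlockDescentCycle

-- `ρ` is a radius in the seminorms `‖A k ·‖`; in the Euclidean norms it is at most `R₀ * √L_max`.
theorem bcd_cost_to_go_general_general [LinearOrder ι] [LocallyFiniteOrderBot ι]
    (A : ∀ k, E k →ₗ[ℝ] H) (b : H) (X : ∀ k, Set (E k)) (h : ∀ k, E k → ℝ)
    (hh : ∀ k, ConvexOn ℝ (X k) (h k)) (x : ℕ → ∀ k, E k) (hx0 : ∀ k, x 0 k ∈ X k)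
    (hcycle : ∀ r, IsBlockDescentCycle A b h X (x r) (x (r + 1)))
    (z : ∀ k, E k) (hz : ∀ k, z k ∈ X k) (ρ : ℝ)
    (hρ : ∀ y, (∀ k, y k ∈ X k) → blockObjective A b h y ≤ blockObjective A b h (x 0) →
      √(∑ k, ‖A k (y k - z k)‖ ^ 2) ≤ ρ)
    (r : ℕ) :
    blockObjective A b h (x (r + 1)) - blockObjective A b h z ≤
      ρ * Fintype.card ι * √(∑ k, ‖A k (x (r + 1) k - x r k)‖ ^ 2) := by
  have iterate_mem : ∀ n k, x n k ∈ X k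
    | 0 => hx0
    | n + 1 => fun k ↦ (hcycle n k).1
  have antitone_objective : Antitone fun n ↦ blockObjective A b h (x n) :=
    antitone_nat_of_succ_le fun n ↦ (hcycle n).blockObjective_le (iterate_mem n)
  refine ((hcycle r).blockObjective_sub_le_card_mul hh hz).trans ?_
  rw [mul_comm ρ]
  gcongr
  exact hρ _ (iterate_mem _) (antitone_objective (Nat.zero_le _))

end CostToGo

section Matrix

variable {K M N : ℕ}

theorem sqnorm_eq_norm_sq {n : ℕ} (v : Fin n → ℝ) : sqnorm v = ‖WithLp.toLp 2 v‖ ^ 2 := by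
  rw [sqnorm, EuclideanSpace.real_norm_sq_eq]

theorem sqnorm_nonneg {n : ℕ} (v : Fin n → ℝ) : 0 ≤ sqnorm v :=
  sum_nonneg fun _ _ ↦ sq_nonneg _

theorem sqnorm_smul {n : ℕ} (t : ℝ) (v : Fin n → ℝ) : sqnorm (t • v) = t ^ 2 * sqnorm v := by
  simp only [sqnorm, mul_sum, Pi.smul_apply, smul_eq_mul, mul_pow]

theorem sqnorm_mulVec_le_sum_sq_mul (A : Matrix (Fin M) (Fin N) ℝ) (v : Fin N → ℝ) :
    sqnorm (A.mulVec v) ≤ (∑ i, ∑ j, A i j ^ 2) * sqnorm v := by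
  rw [sum_mul]
  exact sum_le_sum fun i _ ↦ sum_mul_sq_le_sq_mul_sq univ (A i) v

theorem sqnorm_mulVec_le_lamMaxQ_mul (A : Matrix (Fin M) (Fin N) ℝ) (v : Fin N → ℝ) :
    sqnorm (A.mulVec v) ≤ lamMaxQ A * sqnorm v := by
  have bddAbove : BddAbove {r : ℝ | ∃ v : Fin N → ℝ, sqnorm v = 1 ∧ r = sqnorm (A.mulVec v)} := by
    refine ⟨∑ i, ∑ j, A i j ^ 2, ?_⟩
    rintro _ ⟨w, hw, rfl⟩
    simpa only [hw, mul_one] using sqnorm_mulVec_le_sum_sq_mul A w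
  rcases (sqnorm_nonneg v).eq_or_lt with hv | hv
  · simpa only [← hv, mul_zero] using sqnorm_mulVec_le_sum_sq_mul A v
  · have inv_sqrt_sq : (√(sqnorm v))⁻¹ ^ 2 = (sqnorm v)⁻¹ := by
      rw [inv_pow, Real.sq_sqrt hv.le]
    have normalized_le : sqnorm (A.mulVec ((√(sqnorm v))⁻¹ • v)) ≤ lamMaxQ A :=
      le_csSup bddAbove ⟨_, by rw [sqnorm_smul, inv_sqrt_sq, inv_mul_cancel₀ hv.ne'], rfl⟩
    rwa [Matrix.mulVec_smul, sqnorm_smul, inv_sqrt_sq, inv_mul_le_iff₀' hv] at normalized_le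

theorem sqrt_sum_sqnorm_mulVec_le (hK : 1 ≤ K) (A : Fin K → Matrix (Fin M) (Fin N) ℝ)
    (v : Fin K → Fin N → ℝ) :
    √(∑ k, sqnorm ((A k).mulVec (v k))) ≤
      √(∑ k, sqnorm (v k)) * √(maxOf hK fun k ↦ lamMaxQ (A k)) := by
  rw [← Real.sqrt_mul (sum_nonneg fun k _ ↦ sqnorm_nonneg _), mul_comm, mul_sum]
  refine Real.sqrt_le_sqrt (sum_le_sum fun k _ ↦ (sqnorm_mulVec_le_lamMaxQ_mul _ _).trans ?_)
  exact mul_le_mul_of_nonneg_right (le_sup' (fun k ↦ lamMaxQ (A k)) (mem_univ k))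
    (sqnorm_nonneg _)

/-- Multiplication by a matrix, with Euclidean codomain, so that `‖mulVecEuclidean A v‖ ^ 2` is
`sqnorm (A.mulVec v)`; the domain keeps the plain function type of the blocks. -/
def mulVecEuclidean (A : Matrix (Fin M) (Fin N) ℝ) :
    (Fin N → ℝ) →ₗ[ℝ] EuclideanSpace ℝ (Fin M) :=
  (WithLp.linearEquiv 2 ℝ (Fin M → ℝ)).symm.toLinearMap ∘ₗ A.mulVecLin

theorem norm_mulVecEuclidean_sq (A : Matrix (Fin M) (Fin N) ℝ) (v : Fin N → ℝ) :
    ‖mulVecEuclidean A v‖ ^ 2 = sqnorm (A.mulVec v) :=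
  (sqnorm_eq_norm_sq _).symm

theorem blockObjective_mulVecEuclidean (A : Fin K → Matrix (Fin M) (Fin N) ℝ) (b : Fin M → ℝ)
    (h : Fin K → (Fin N → ℝ) → ℝ) :
    blockObjective (fun k ↦ mulVecEuclidean (A k)) (WithLp.toLp 2 b) h = fq A b h := by
  funext x
  have residual_eq : blockResidual (fun k ↦ mulVecEuclidean (A k)) (WithLp.toLp 2 b) x =
      WithLp.toLp 2 (resid A b x) := by
    simp [blockResidual, resid, mulVecEuclidean]
  rw [blockObjective, residual_eq, ← sqnorm_eq_norm_sq, fq, gq]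

theorem BCDStep.isBlockDescentCycle {A : Fin K → Matrix (Fin M) (Fin N) ℝ} {b : Fin M → ℝ}
    {h : Fin K → (Fin N → ℝ) → ℝ} {X : Fin K → Set (Fin N → ℝ)} {x xp : Fin K → Fin N → ℝ}
    (hstep : BCDStep A b h X x xp) :
    IsBlockDescentCycle (fun k ↦ mulVecEuclidean (A k)) (WithLp.toLp 2 b) h X x xp := by
  intro k
  have wpt_eq : (Iio k).piecewise xp x = wpt x xp k := by
    funext j
    simp only [piecewise, mem_Iio, wpt]
  rw [blockObjective_mulVecEuclidean, wpt_eq]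
  exact hstep k

end Matrix

/-- Lemma 4, case 3: cost-to-go estimate of cyclic exact BCD
for general matrices `A_k`. -/
theorem bcd_cost_to_go_general {K M N : ℕ} (hK : 1 ≤ K) (hM : 1 ≤ M) (hN : 1 ≤ N)
    (A : Fin K → Matrix (Fin M) (Fin N) ℝ) (b : Fin M → ℝ)
    (X : Fin K → Set (Fin N → ℝ)) (h : Fin K → (Fin N → ℝ) → ℝ)
    (hXne : ∀ k, (X k).Nonempty) (hXcl : ∀ k, IsClosed (X k))
    (hXcv : ∀ k, Convex ℝ (X k))
    (hhcv : ∀ k, ConvexOn ℝ Set.univ (h k))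
    (hhlsc : ∀ k, LowerSemicontinuous (h k))
    (x : ℕ → Fin K → Fin N → ℝ) (hx0 : ∀ k, x 0 k ∈ X k)
    (hstep : ∀ r : ℕ, BCDStep A b h X (x r) (x (r + 1)))
    (xstar : Fin K → Fin N → ℝ) (hxstarX : ∀ k, xstar k ∈ X k)
    (hxstar : ∀ y : Fin K → Fin N → ℝ, (∀ k, y k ∈ X k) → fq A b h xstar ≤ fq A b h y)
    (R0 : ℝ)
    (hR0 : ∀ z : Fin K → Fin N → ℝ, (∀ k, z k ∈ X k) → fq A b h z ≤ fq A b h (x 0) →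
      ∀ y : Fin K → Fin N → ℝ, (∀ k, y k ∈ X k) →
        (∀ z' : Fin K → Fin N → ℝ, (∀ k, z' k ∈ X k) → fq A b h y ≤ fq A b h z') →
        Real.sqrt (∑ k, sqnorm (z k - y k)) ≤ R0)
    (r : ℕ) :
    fq A b h (x (r + 1)) - fq A b h xstar ≤
      R0 * Real.sqrt (maxOf hK (fun k => lamMaxQ (A k))) * ((K : ℝ) + 2) *
        Real.sqrt (∑ k, sqnorm ((A k).mulVec (x (r + 1) k - x r k))) := by
  have hR0_nonneg : 0 ≤ R0 := (Real.sqrt_nonneg _).trans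
    (hR0 xstar hxstarX (hxstar _ hx0) xstar hxstarX hxstar)
  have cost_to_go := bcd_cost_to_go_general_general (fun k ↦ mulVecEuclidean (A k))
    (WithLp.toLp 2 b) X h (fun k ↦ (hhcv k).subset (Set.subset_univ _) (hXcv k)) x hx0
    (fun r ↦ (hstep r).isBlockDescentCycle) xstar hxstarX
    (R0 * √(maxOf hK fun k ↦ lamMaxQ (A k)))
  simp only [blockObjective_mulVecEuclidean, norm_mulVecEuclidean_sq, Fintype.card_fin]
    at cost_to_go
  refine (cost_to_go (fun y hy hfy ↦ ?_) r).trans ?_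
  · exact (sqrt_sum_sqnorm_mulVec_le hK A fun k ↦ y k - xstar k).trans
      (by gcongr; exact hR0 y hy hfy xstar hxstarX hxstar)
  · gcongr
    linarith
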